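/- arXiv:1801.09909 — 8 statements merged into one kernel-verified Lean document; each statement's English description precedes it below -/
import Mathlib

section
/- Let r > 0 and s ≥ 0, and let G₀, G_r : [0,∞) → [0,∞) be measurable functions satisfying the renewal identity G_r(T) = ∫₀^T r·e^{−rt}·G₀(t)·G_r(T−t) dt + e^{−rT}·G₀(T) for every T ≥ 0. If the Laplace transform G̃₀(r+s) = ∫₀^∞ e^{−(r+s)T}·G₀(T) dT is finite and satisfies r·G̃₀(r+s) < 1, and if G̃_r(s) = ∫₀^∞ e^{−sT}·G_r(T) dT is finite, then G̃_r(s) = G̃₀(r+s) / (1 − r·G̃₀(r+s)). -/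
open MeasureTheory Set Real

/-!
The exponential weight `exp (-s * T)` is multiplicative in `T`, so weighting kernel, forcing term
and solution by it preserves a renewal equation. Integrating over the half-line turns the
convolution into a product, whence `B = r * A * B + A`, where `A` is the Laplace transform of `G0`
at `r + s` and `B` that of `Gr` at `s`. In the form `(1 - r * A) * B = A` this also rules out
`r * A = 1`.
-/

/-- The one-sided Laplace transform `∫₀^∞ exp (-s T) f T dT` at a real argument `s`. It is a Bochner
integral, hence `0` where the integrand is not integrable. -/
noncomputable def laplaceTransform {E : Type*} [NormedAddCommGroup E] [NormedSpace ℝ E]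
    (f : ℝ → E) (s : ℝ) : E :=
  ∫ T in Ioi (0 : ℝ), exp (-s * T) • f T

lemma laplaceTransform_exp_smul {E : Type*} [NormedAddCommGroup E] [NormedSpace ℝ E]
    (f : ℝ → E) (r s : ℝ) :
    laplaceTransform (fun T => exp (-r * T) • f T) s = laplaceTransform f (r + s) := by
  simp only [laplaceTransform, smul_smul, ← exp_add, ← add_mul, neg_add_rev]

lemma laplaceTransform_const_smul {E : Type*} [NormedAddCommGroup E] [NormedSpace ℝ E]
    (c : ℝ) (f : ℝ → E) (s : ℝ) :
    laplaceTransform (fun T => c • f T) s = c • laplaceTransform f s := by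
  simp only [laplaceTransform, smul_comm _ c, integral_smul]

section RenewalEquation

variable {E F : Type*} [NormedAddCommGroup E] [NormedSpace ℝ E] [NormedAddCommGroup F]
  [NormedSpace ℝ F] {L : E →L[ℝ] F →L[ℝ] F} {k : ℝ → E} {f g : ℝ → F}

/-- The renewal equation `g = k ⋆ g + f` on `(0, ∞)` for an unknown `g`, with kernel `k` and forcing
term `f`; the one-sided convolution is taken along the continuous bilinear map `L`. -/
def RenewalEquation (L : E →L[ℝ] F →L[ℝ] F) (k : ℝ → E) (f g : ℝ → F) : Prop :=
  ∀ T, 0 < T → g T = (∫ t in Ioc 0 T, L (k t) (g (T - t))) + f T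

namespace RenewalEquation

lemma exp_smul (h : RenewalEquation L k f g) (s : ℝ) :
    RenewalEquation L (fun t => exp (-s * t) • k t) (fun t => exp (-s * t) • f t)
      (fun t => exp (-s * t) • g t) := by
  intro T hT
  have weight_mul (t : ℝ) : exp (-s * t) * exp (-s * (T - t)) = exp (-s * T) := by
    rw [← exp_add]
    ring_nf
  simp only [map_smul, smul_apply, smul_smul, mul_comm (exp (-s * (T - _))), weight_mul,
    integral_smul]
  rw [← smul_add, ← h T hT]

lemma integral_eq [CompleteSpace E] [CompleteSpace F] (h : RenewalEquation L k f g)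
    (hk : IntegrableOn k (Ioi 0)) (hf : IntegrableOn f (Ioi 0)) (hg : IntegrableOn g (Ioi 0)) :
    ∫ T in Ioi 0, g T = L (∫ T in Ioi 0, k T) (∫ T in Ioi 0, g T) + ∫ T in Ioi 0, f T := by
  have convolution_eq : ∀ T ∈ Ioi (0 : ℝ), ∫ t in 0..T, L (k t) (g (T - t)) = g T - f T := by
    intro T hT
    rw [intervalIntegral.integral_of_le hT.le, h T hT, add_sub_cancel_right]
  rw [← integral_posConvolution hk hg L, setIntegral_congr_fun measurableSet_Ioi convolution_eq,
    integral_sub hg hf, sub_add_cancel]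

lemma laplaceTransform_eq [CompleteSpace E] [CompleteSpace F] (h : RenewalEquation L k f g) {s : ℝ}
    (hk : IntegrableOn (fun T => exp (-s * T) • k T) (Ioi 0))
    (hf : IntegrableOn (fun T => exp (-s * T) • f T) (Ioi 0))
    (hg : IntegrableOn (fun T => exp (-s * T) • g T) (Ioi 0)) :
    laplaceTransform g s
      = L (laplaceTransform k s) (laplaceTransform g s) + laplaceTransform f s :=
  (h.exp_smul s).integral_eq hk hf hg

end RenewalEquation

end RenewalEquation

theorem renewal_laplace_formula_general {𝕜 : Type*} [RCLike 𝕜] {r s : ℝ} {G0 Gr : ℝ → 𝕜}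
    (hrenewal : RenewalEquation (ContinuousLinearMap.mul ℝ 𝕜)
      (fun t => (r * exp (-r * t)) • G0 t) (fun T => exp (-r * T) • G0 T) Gr)
    (hG0int : IntegrableOn (fun T => exp (-(r + s) * T) • G0 T) (Ioi 0))
    (hGrint : IntegrableOn (fun T => exp (-s * T) • Gr T) (Ioi 0)) :
    laplaceTransform Gr s
      = laplaceTransform G0 (r + s) / (1 - r • laplaceTransform G0 (r + s)) := by
  have forcing_integrable :
      IntegrableOn (fun T => exp (-s * T) • exp (-r * T) • G0 T) (Ioi 0) := by
    simpa only [smul_smul, ← exp_add, ← add_mul, ← neg_add_rev] using hG0int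
  have kernel_integrable :
      IntegrableOn (fun T => exp (-s * T) • (r * exp (-r * T)) • G0 T) (Ioi 0) := by
    simpa only [IntegrableOn, mul_smul, smul_comm _ r] using forcing_integrable.fun_smul r
  have transform_eq := hrenewal.laplaceTransform_eq kernel_integrable forcing_integrable hGrint
  simp only [mul_smul, laplaceTransform_const_smul, laplaceTransform_exp_smul,
    ContinuousLinearMap.mul_apply'] at transform_eq
  have denominator_ne_zero : 1 - r • laplaceTransform G0 (r + s) ≠ 0 := by
    intro h
    have numerator_eq_zero : laplaceTransform G0 (r + s) = 0 := by
      linear_combination laplaceTransform Gr s * h - transform_eq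
    simp [numerator_eq_zero] at h
  rw [eq_div_iff denominator_ne_zero]
  linear_combination transform_eq

/-- **Renewal formula for the Laplace transform of the generating function**
(Theorem 1 of "Properties of additive functionals of Brownian motion with resetting").
If `G₀, Gᵣ` are nonnegative measurable functions on `[0,∞)` satisfying the renewal identity
obtained by conditioning on the first reset time, and the relevant Laplace transforms are
finite with `r·G̃₀(r+s) < 1`, then `G̃ᵣ(s) = G̃₀(r+s)/(1 - r·G̃₀(r+s))`. -/
theorem renewal_laplace_formula
    (r s : ℝ) (hr : 0 < r) (hs : 0 ≤ s)
    (G0 Gr : ℝ → ℝ)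
    (hG0meas : Measurable G0) (hGrmeas : Measurable Gr)
    (hG0nn : ∀ T, 0 ≤ T → 0 ≤ G0 T) (hGrnn : ∀ T, 0 ≤ T → 0 ≤ Gr T)
    (hrenewal : ∀ T, 0 ≤ T →
      Gr T = (∫ t in Ioc (0:ℝ) T, r * Real.exp (-r * t) * G0 t * Gr (T - t))
              + Real.exp (-r * T) * G0 T)
    (hG0int : IntegrableOn (fun T => Real.exp (-(r + s) * T) * G0 T) (Ioi 0))
    (hlt : r * (∫ T in Ioi (0:ℝ), Real.exp (-(r + s) * T) * G0 T) < 1)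
    (hGrint : IntegrableOn (fun T => Real.exp (-s * T) * Gr T) (Ioi 0)) :
    (∫ T in Ioi (0:ℝ), Real.exp (-s * T) * Gr T)
      = (∫ T in Ioi (0:ℝ), Real.exp (-(r + s) * T) * G0 T)
        / (1 - r * (∫ T in Ioi (0:ℝ), Real.exp (-(r + s) * T) * G0 T)) := by
  exact renewal_laplace_formula_general (fun T hT => hrenewal T hT.le) hG0int hGrint
end

section
/- Let r ≥ 0 and let λ₁, λ₂ > 0 satisfy √(λ₁λ₂) > r. Define H : (0,∞) × (0,∞) → [0,∞) by H(t₁,t₂) = Σ_{j=0}^∞ r^j · (t₁t₂)^{(j−1)/2} / Γ((j+1)/2)², where Γ is the Gamma function. Then the series converges for all t₁, t₂ > 0 and ∫₀^∞ ∫₀^∞ e^{−λ₁t₁ − λ₂t₂} · H(t₁,t₂) dt₁ dt₂ = 1/(√(λ₁λ₂) − r). -/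
open MeasureTheory Set Real

/-! Each term of the series is a product of kernels `k_α(t) = t^(α - 1) / Γ(α)`, one in `t₁` and one
in `t₂`, and the Laplace transform of `k_α` at `l` is `l^(-α)`. Since the exponents `α_j` form an
arithmetic progression, integrating term by term turns the series into a geometric one, here of
ratio `r / √(l₁ l₂)`; the same geometric series with absolute values justifies the interchange.
Pointwise convergence needs no estimate for the growth of `Γ`: if `∑ |c_i| l^(-α_i)` is finite, then
`∑ |c_i| k_(α_i)(t)` converges for almost every `t`, in particular for some `t > 1`, where
`t^(α_i) ≥ 1`. -/

section SeriesOfIntegrals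

variable {ι α β E : Type*} [Countable ι] [MeasurableSpace α] [MeasurableSpace β]
  {μ : Measure α} {ν : Measure β} [NormedAddCommGroup E]

lemma ae_summable_norm_of_summable_integral_norm {F : ι → α → E}
    (hF : ∀ i, Integrable (F i) μ) (hsum : Summable fun i ↦ ∫ x, ‖F i x‖ ∂μ) :
    ∀ᵐ x ∂μ, Summable fun i ↦ ‖F i x‖ := by
  have hlintegral : ∫⁻ x, ∑' i, ‖F i x‖ₑ ∂μ ≠ ⊤ := by
    rw [lintegral_tsum fun i ↦ (hF i).1.enorm]
    simp_rw [← ofReal_integral_norm_eq_lintegral_enorm (hF _)]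
    exact hsum.tsum_ofReal_ne_top
  filter_upwards [ae_lt_top' (AEMeasurable.tsum fun i ↦ (hF i).1.enorm) hlintegral] with x hx
  exact NNReal.summable_coe.mpr (ENNReal.tsum_coe_ne_top_iff_summable.mp hx.ne)

lemma hasSum_integral_integral_of_summable_integral_norm [NormedSpace ℝ E] [SFinite μ] [SFinite ν]
    {F : ι → α × β → E} (hF : ∀ i, Integrable (F i) (μ.prod ν))
    (hsum : Summable fun i ↦ ∫ z, ‖F i z‖ ∂μ.prod ν) :
    HasSum (fun i ↦ ∫ z, F i z ∂μ.prod ν) (∫ x, ∫ y, ∑' i, F i (x, y) ∂ν ∂μ) := by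
  have hnorm_integral (i : ι) :
      ∫ x, ‖∫ y, ‖F i (x, y)‖ ∂ν‖ ∂μ = ∫ z, ‖F i z‖ ∂μ.prod ν := by
    simp_rw [integral_prod _ (hF i).norm, norm_of_nonneg (integral_nonneg fun _ ↦ norm_nonneg _)]
  have hinner : ∀ᵐ x ∂μ, ∑' i, ∫ y, F i (x, y) ∂ν = ∫ y, ∑' i, F i (x, y) ∂ν := by
    filter_upwards [ae_all_iff.mpr fun i ↦ (hF i).prod_right_ae,
      ae_summable_norm_of_summable_integral_norm (fun i ↦ (hF i).integral_norm_prod_left)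
        (by simpa only [hnorm_integral] using hsum)] with x hint hx
    exact integral_tsum_of_summable_integral_norm hint hx.of_norm
  have houter : Summable fun i ↦ ∫ x, ‖∫ y, F i (x, y) ∂ν‖ ∂μ :=
    hsum.of_nonneg_of_le (fun i ↦ integral_nonneg fun _ ↦ norm_nonneg _) fun i ↦
      (integral_mono (hF i).integral_prod_left.norm (hF i).integral_norm_prod_left
        fun _ ↦ norm_integral_le_integral_norm _).trans_eq (integral_prod _ (hF i).norm).symm
  rw [← integral_congr_ae hinner]
  simp_rw [integral_prod _ (hF _)]
  exact hasSum_integral_of_summable_integral_norm (fun i ↦ (hF i).integral_prod_left) houter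

lemma hasSum_integral_integral_mul_of_summable_integral_norm {𝕜 : Type*} [RCLike 𝕜]
    [SFinite μ] [SFinite ν] {f : ι → α → 𝕜} {g : ι → β → 𝕜}
    (hf : ∀ i, Integrable (f i) μ) (hg : ∀ i, Integrable (g i) ν)
    (hsum : Summable fun i ↦ (∫ x, ‖f i x‖ ∂μ) * ∫ y, ‖g i y‖ ∂ν) :
    HasSum (fun i ↦ (∫ x, f i x ∂μ) * ∫ y, g i y ∂ν) (∫ x, ∫ y, ∑' i, f i x * g i y ∂ν ∂μ) := by
  simp_rw [← integral_prod_mul] at hsum ⊢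
  exact hasSum_integral_integral_of_summable_integral_norm (fun i ↦ (hf i).mul_prod (hg i))
    (by simpa only [norm_mul] using hsum)

end SeriesOfIntegrals

section RiemannLiouville

/-- The Riemann–Liouville kernel of order `a`, i.e. the convolution kernel of fractional integration
of order `a`; meaningful for `0 < a` and `0 < t`. The series of the theorem is a sum of products of
two such kernels. -/
noncomputable def riemannLiouvilleKernel (a t : ℝ) : ℝ :=
  t ^ (a - 1) / Gamma a

variable {a b l t : ℝ}

lemma riemannLiouvilleKernel_nonneg (ha : 0 < a) (ht : 0 ≤ t) : 0 ≤ riemannLiouvilleKernel a t :=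
  div_nonneg (rpow_nonneg ht _) (Gamma_pos_of_pos ha).le

lemma integrableOn_exp_neg_mul_riemannLiouvilleKernel (ha : 0 < a) (hl : 0 < l) :
    IntegrableOn (fun t ↦ exp (-l * t) * riemannLiouvilleKernel a t) (Ioi 0) := by
  have h := integrableOn_rpow_mul_exp_neg_mul_rpow (by linarith : -1 < a - 1) one_pos hl
  simp_rw [rpow_one] at h
  refine IntegrableOn.congr_fun (h.div_const (Gamma a)) (fun t _ ↦ ?_) measurableSet_Ioi
  simp only [riemannLiouvilleKernel]
  ring

lemma integral_exp_neg_mul_riemannLiouvilleKernel (ha : 0 < a) (hl : 0 < l) :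
    ∫ t in Ioi 0, exp (-l * t) * riemannLiouvilleKernel a t = l ^ (-a) := by
  have hΓ : Gamma a ≠ 0 := (Gamma_pos_of_pos ha).ne'
  calc ∫ t in Ioi 0, exp (-l * t) * riemannLiouvilleKernel a t
      = (∫ t in Ioi 0, t ^ (a - 1) * exp (-(l * t))) / Gamma a := by
        rw [← integral_div]
        congr with t
        rw [riemannLiouvilleKernel, neg_mul]
        ring
    _ = l ^ (-a) := by
        rw [integral_rpow_mul_exp_neg_mul_Ioi ha hl, mul_div_cancel_right₀ _ hΓ, one_div,
          inv_rpow hl.le, rpow_neg hl.le]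

lemma integral_norm_exp_neg_mul_riemannLiouvilleKernel (ha : 0 < a) (hl : 0 < l) :
    ∫ t in Ioi 0, ‖exp (-l * t) * riemannLiouvilleKernel a t‖ = l ^ (-a) := by
  rw [← integral_exp_neg_mul_riemannLiouvilleKernel ha hl]
  exact setIntegral_congr_fun measurableSet_Ioi fun t ht ↦
    norm_of_nonneg (mul_nonneg (exp_pos _).le (riemannLiouvilleKernel_nonneg ha (le_of_lt ht)))

lemma integral_norm_const_mul_exp_neg_mul_riemannLiouvilleKernel (c : ℝ) (ha : 0 < a)
    (hl : 0 < l) :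
    ∫ t in Ioi 0, ‖c * (exp (-l * t) * riemannLiouvilleKernel a t)‖ = ‖c * l ^ (-a)‖ := by
  simp_rw [norm_mul c, integral_const_mul]
  rw [integral_norm_exp_neg_mul_riemannLiouvilleKernel ha hl, norm_of_nonneg (rpow_nonneg hl.le _)]

lemma summable_div_Gamma_of_summable_mul_rpow_neg {ι : Type*} [Countable ι] {c p : ι → ℝ}
    (hp : ∀ i, 0 < p i) (hl : 0 < l) (hsum : Summable fun i ↦ c i * l ^ (-p i)) :
    Summable fun i ↦ c i / Gamma (p i) := by
  have hae : ∀ᵐ t ∂volume.restrict (Ioi 0),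
      Summable fun i ↦ ‖c i * (exp (-l * t) * riemannLiouvilleKernel (p i) t)‖ :=
    ae_summable_norm_of_summable_integral_norm
      (fun i ↦ (integrableOn_exp_neg_mul_riemannLiouvilleKernel (hp i) hl).const_mul (c i))
      (by simpa only [integral_norm_const_mul_exp_neg_mul_riemannLiouvilleKernel _ (hp _) hl]
        using hsum.norm)
  have : (ae (volume.restrict (Ioi (1 : ℝ)))).NeBot := ae_restrict_neBot.mpr (by simp)
  obtain ⟨t, ht, hsum_t⟩ : ∃ t ∈ Ioi (1 : ℝ),
      Summable fun i ↦ ‖c i * (exp (-l * t) * riemannLiouvilleKernel (p i) t)‖ :=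
    ((ae_restrict_mem measurableSet_Ioi).and (ae_restrict_of_ae_restrict_of_subset
      (Ioi_subset_Ioi zero_le_one) hae)).exists
  have ht₀ : 0 < t := zero_lt_one.trans ht
  refine (hsum_t.mul_left (exp (l * t) * t)).of_norm_bounded fun i ↦ ?_
  have hexpand : exp (l * t) * t * ‖c i * (exp (-l * t) * riemannLiouvilleKernel (p i) t)‖ =
      ‖c i / Gamma (p i)‖ * t ^ p i := by
    rw [riemannLiouvilleKernel, rpow_sub_one ht₀.ne', neg_mul, exp_neg]
    simp only [norm_mul, norm_div, norm_inv, norm_of_nonneg ht₀.le,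
      norm_of_nonneg (exp_pos (l * t)).le, norm_of_nonneg (rpow_nonneg ht₀.le (p i))]
    field_simp
  rw [hexpand]
  exact le_mul_of_one_le_right (norm_nonneg _) (one_le_rpow (le_of_lt ht) (hp i).le)

lemma hasSum_double_laplace_riemannLiouvilleKernel {ι : Type*} [Countable ι] {c p q : ι → ℝ}
    (hp : ∀ i, 0 < p i) (hq : ∀ i, 0 < q i) {l₁ l₂ : ℝ} (hl₁ : 0 < l₁) (hl₂ : 0 < l₂)
    (hsum : Summable fun i ↦ c i * l₁ ^ (-p i) * l₂ ^ (-q i)) :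
    HasSum (fun i ↦ c i * l₁ ^ (-p i) * l₂ ^ (-q i))
      (∫ t₁ in Ioi 0, ∫ t₂ in Ioi 0, ∑' i,
        c i * (exp (-l₁ * t₁) * riemannLiouvilleKernel (p i) t₁) *
          (exp (-l₂ * t₂) * riemannLiouvilleKernel (q i) t₂)) := by
  have hsum_norm : Summable fun i ↦
      (∫ t in Ioi 0, ‖c i * (exp (-l₁ * t) * riemannLiouvilleKernel (p i) t)‖) *
        ∫ t in Ioi 0, ‖exp (-l₂ * t) * riemannLiouvilleKernel (q i) t‖ := by
    simp only [integral_norm_const_mul_exp_neg_mul_riemannLiouvilleKernel _ (hp _) hl₁,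
      integral_norm_exp_neg_mul_riemannLiouvilleKernel (hq _) hl₂]
    simpa only [norm_mul, norm_of_nonneg (rpow_nonneg hl₂.le _)] using hsum.norm
  have key := hasSum_integral_integral_mul_of_summable_integral_norm
    (fun i ↦ (integrableOn_exp_neg_mul_riemannLiouvilleKernel (hp i) hl₁).const_mul (c i))
    (fun i ↦ integrableOn_exp_neg_mul_riemannLiouvilleKernel (hq i) hl₂) hsum_norm
  simpa only [integral_const_mul, integral_exp_neg_mul_riemannLiouvilleKernel (hp _) hl₁,
    integral_exp_neg_mul_riemannLiouvilleKernel (hq _) hl₂] using key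

lemma exp_mul_tsum_eq_tsum_riemannLiouvilleKernel {ι : Type*} {t₁ t₂ : ℝ} (ht₁ : 0 ≤ t₁)
    (ht₂ : 0 ≤ t₂) (l₁ l₂ : ℝ) (c p : ι → ℝ) :
    exp (-l₁ * t₁ - l₂ * t₂) * ∑' j, c j * (t₁ * t₂) ^ (p j - 1) / Gamma (p j) ^ 2 =
      ∑' j, c j * (exp (-l₁ * t₁) * riemannLiouvilleKernel (p j) t₁) *
        (exp (-l₂ * t₂) * riemannLiouvilleKernel (p j) t₂) := by
  rw [← tsum_mul_left]
  refine tsum_congr fun j ↦ ?_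
  rw [mul_rpow ht₁ ht₂, sub_eq_add_neg, ← neg_mul, exp_add]
  simp only [riemannLiouvilleKernel]
  ring

end RiemannLiouville

section GammaSeries

variable {a b r : ℝ}

lemma rpow_mul_natCast_add {x : ℝ} (hx : 0 < x) (a b : ℝ) (j : ℕ) :
    x ^ (b * j + a) = x ^ a * (x ^ b) ^ j := by
  rw [add_comm, rpow_add hx, rpow_mul_natCast hx.le]

lemma hasSum_pow_mul_rpow_neg_mul_natCast_add {x : ℝ} (hx : 0 < x) (hr : |r| < x ^ b) (a : ℝ) :
    HasSum (fun j : ℕ ↦ r ^ j * x ^ (-(b * j + a))) (x ^ (b - a) / (x ^ b - r)) := by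
  have hxb : 0 < x ^ b := rpow_pos_of_pos hx b
  have hratio : |r / x ^ b| < 1 := by rwa [abs_div, abs_of_pos hxb, div_lt_one hxb]
  have hne : x ^ b - r ≠ 0 := (sub_pos.mpr ((le_abs_self r).trans_lt hr)).ne'
  convert! (hasSum_geometric_of_abs_lt_one hratio).mul_left (x ^ (-a)) using 1
  · ext j
    rw [rpow_neg hx.le, rpow_mul_natCast_add hx, rpow_neg hx.le, div_pow]
    field_simp
  · rw [sub_eq_add_neg b a, rpow_add hx]
    field_simp

lemma summable_pow_div_Gamma_mul_natCast_add (ha : 0 < a) (hb : 0 < b) (x : ℝ) :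
    Summable fun j : ℕ ↦ x ^ j / Gamma (b * j + a) := by
  have hl : 0 < (|x| + 1) ^ b⁻¹ := by positivity
  have hx : |x| < ((|x| + 1) ^ b⁻¹) ^ b := by
    rw [rpow_inv_rpow (by positivity) hb.ne']
    exact lt_add_one _
  exact summable_div_Gamma_of_summable_mul_rpow_neg (fun j ↦ by positivity) hl
    (hasSum_pow_mul_rpow_neg_mul_natCast_add hl hx a).summable

lemma summable_pow_mul_rpow_div_Gamma_sq (ha : 0 < a) (hb : 0 < b) (r : ℝ) {x : ℝ} (hx : 0 < x) :
    Summable fun j : ℕ ↦ r ^ j * x ^ (b * j + a - 1) / Gamma (b * j + a) ^ 2 := by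
  have hinv := (summable_pow_div_Gamma_mul_natCast_add ha hb 1).tendsto_cofinite_zero
  have hpow := (summable_pow_div_Gamma_mul_natCast_add ha hb (r * x ^ b)).norm
  refine ((hpow.mul_tendsto_const hinv).mul_left (x ^ (a - 1))).congr fun j ↦ ?_
  rw [add_sub_assoc, rpow_mul_natCast_add hx, one_pow, mul_pow]
  ring

lemma double_laplace_pow_mul_rpow_div_Gamma_sq (ha : 0 < a) (hb : 0 ≤ b) {l₁ l₂ : ℝ}
    (hl₁ : 0 < l₁) (hl₂ : 0 < l₂) (hr : |r| < (l₁ * l₂) ^ b) :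
    ∫ t₁ in Ioi 0, ∫ t₂ in Ioi 0, exp (-l₁ * t₁ - l₂ * t₂) *
      ∑' j : ℕ, r ^ j * (t₁ * t₂) ^ (b * j + a - 1) / Gamma (b * j + a) ^ 2 =
    (l₁ * l₂) ^ (b - a) / ((l₁ * l₂) ^ b - r) := by
  have hα (j : ℕ) : 0 < b * j + a := by positivity
  have hl : 0 < l₁ * l₂ := mul_pos hl₁ hl₂
  have hgeom : HasSum (fun j : ℕ ↦ r ^ j * l₁ ^ (-(b * j + a)) * l₂ ^ (-(b * j + a)))
      ((l₁ * l₂) ^ (b - a) / ((l₁ * l₂) ^ b - r)) := by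
    simpa only [mul_rpow hl₁.le hl₂.le, mul_assoc] using
      hasSum_pow_mul_rpow_neg_mul_natCast_add hl hr a
  calc _ = ∫ t₁ in Ioi 0, ∫ t₂ in Ioi 0, ∑' j : ℕ,
        r ^ j * (exp (-l₁ * t₁) * riemannLiouvilleKernel (b * j + a) t₁) *
          (exp (-l₂ * t₂) * riemannLiouvilleKernel (b * j + a) t₂) :=
        setIntegral_congr_fun measurableSet_Ioi fun t₁ ht₁ ↦
          setIntegral_congr_fun measurableSet_Ioi fun t₂ ht₂ ↦
            exp_mul_tsum_eq_tsum_riemannLiouvilleKernel (le_of_lt ht₁) (le_of_lt ht₂) _ _ _ _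
    _ = (l₁ * l₂) ^ (b - a) / ((l₁ * l₂) ^ b - r) :=
        (hasSum_double_laplace_riemannLiouvilleKernel hα hα hl₁ hl₂ hgeom.summable).unique hgeom

end GammaSeries

theorem double_laplace_occupation_kernel_general
    {a b r l₁ l₂ : ℝ} (ha : 0 < a) (hb : 0 < b) (hl₁ : 0 < l₁) (hl₂ : 0 < l₂)
    (hr : |r| < (l₁ * l₂) ^ b) :
    (∀ t₁ t₂ : ℝ, 0 < t₁ → 0 < t₂ → Summable fun j : ℕ ↦
      r ^ j * (t₁ * t₂) ^ (b * j + a - 1) / Gamma (b * j + a) ^ 2) ∧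
    ∫ t₁ in Ioi 0, ∫ t₂ in Ioi 0, exp (-l₁ * t₁ - l₂ * t₂) *
      ∑' j : ℕ, r ^ j * (t₁ * t₂) ^ (b * j + a - 1) / Gamma (b * j + a) ^ 2 =
    (l₁ * l₂) ^ (b - a) / ((l₁ * l₂) ^ b - r) :=
  ⟨fun _ _ ht₁ ht₂ ↦ summable_pow_mul_rpow_div_Gamma_sq ha hb r (mul_pos ht₁ ht₂),
    double_laplace_pow_mul_rpow_div_Gamma_sq ha hb.le hl₁ hl₂ hr⟩

/-- **Double Laplace transform of the occupation-time kernel** (core of Theorem 4).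
For `r ≥ 0` and `λ₁, λ₂ > 0` with `√(λ₁λ₂) > r`, the series
`H(t₁,t₂) = ∑_{j≥0} rʲ (t₁t₂)^{(j-1)/2} / Γ((j+1)/2)²` converges for all `t₁,t₂ > 0`, and
`∫₀^∞∫₀^∞ e^{-λ₁t₁-λ₂t₂} H(t₁,t₂) dt₁ dt₂ = 1/(√(λ₁λ₂) - r)`. -/
theorem double_laplace_occupation_kernel
    (r : ℝ) (hr : 0 ≤ r) (l1 l2 : ℝ) (hl1 : 0 < l1) (hl2 : 0 < l2)
    (hgt : r < Real.sqrt (l1 * l2)) :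
    (∀ t1 t2 : ℝ, 0 < t1 → 0 < t2 →
      Summable (fun j : ℕ =>
        r ^ j * (t1 * t2) ^ (((j : ℝ) - 1) / 2) / (Real.Gamma (((j : ℝ) + 1) / 2)) ^ 2)) ∧
    (∫ t1 in Ioi (0:ℝ), ∫ t2 in Ioi (0:ℝ),
        Real.exp (-l1 * t1 - l2 * t2) *
          (∑' j : ℕ,
            r ^ j * (t1 * t2) ^ (((j : ℝ) - 1) / 2) / (Real.Gamma (((j : ℝ) + 1) / 2)) ^ 2))
      = 1 / (Real.sqrt (l1 * l2) - r) := by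
  have hΓ (j : ℕ) : ((j : ℝ) + 1) / 2 = 1 / 2 * j + 1 / 2 := by ring
  have hexp (j : ℕ) : ((j : ℝ) - 1) / 2 = 1 / 2 * j + 1 / 2 - 1 := by ring
  simpa only [hΓ, hexp, sqrt_eq_rpow, sub_self, rpow_zero] using
    double_laplace_occupation_kernel_general (a := 1 / 2) (b := 1 / 2) one_half_pos one_half_pos
      hl1 hl2 (by rwa [abs_of_nonneg hr, ← sqrt_eq_rpow])
end

section
/- Define W : (0,∞) → ℝ by W(x) = (1/x) · Σ_{j=0}^∞ x^j / Γ((j+1)/2)², where Γ is the Gamma function. Fix r > 0 and a ∈ (0,1). Then lim_{T→∞} (1/T) · log[ (r/T) · e^{−rT} · W(rT√(a(1−a))) ] = −r(1 − 2√(a(1−a))). -/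
open MeasureTheory Set Real Filter

/-- The scaling function `W` appearing in the density of the positive occupation time of
reset Brownian motion: `W(x) = (1/x) ∑_{j≥0} xʲ / Γ((j+1)/2)²`. -/
noncomputable def occScalingW (x : ℝ) : ℝ :=
  (1 / x) * ∑' j : ℕ, x ^ j / (Real.Gamma (((j : ℝ) + 1) / 2)) ^ 2

/-! By Legendre duplication, consecutive values of `g j = Γ((j+1)/2)` satisfy
`g j * g (j+1) = √π j! / 2 ^ j`, so `∑ xʲ / (g j * g (j+1)) = exp (2x) / √π`. Log-convexity
of `Γ` gives `g j ≤ 2 g (j+1)`, so replacing one factor of `g j ^ 2` by a neighbouring value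
costs only a bounded factor (and one power of `x`). Hence the series in `W(x)` equals `exp (2x)`
up to polynomial factors, so that `log W(x) / x → 2`. -/

section GammaHalfStep

variable {s : ℝ}

lemma Gamma_add_half_le_sqrt_mul_Gamma (hs : 0 < s) :
    Real.Gamma (s + 1 / 2) ≤ √s * Real.Gamma s := by
  have log_convex := Real.Gamma_mul_add_mul_le_rpow_Gamma_mul_rpow_Gamma
    (s := s) (t := s + 1) (a := 1 / 2) (b := 1 / 2)
    hs (by positivity) (by norm_num) (by norm_num) (by norm_num)
  have hΓ : 0 ≤ Real.Gamma s := (Real.Gamma_pos_of_pos hs).le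
  calc Real.Gamma (s + 1 / 2) = Real.Gamma (1 / 2 * s + 1 / 2 * (s + 1)) := by ring_nf
    _ ≤ √(Real.Gamma s) * √(s * Real.Gamma s) := by
      simpa only [Real.Gamma_add_one hs.ne', ← Real.sqrt_eq_rpow] using log_convex
    _ = √s * Real.Gamma s := by
      rw [Real.sqrt_mul hs.le, mul_left_comm, Real.mul_self_sqrt hΓ]

lemma Gamma_le_two_mul_Gamma_add_half (hs : 1 / 2 ≤ s) :
    Real.Gamma s ≤ 2 * Real.Gamma (s + 1 / 2) := by
  have hs0 : 0 < s := by linarith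
  have sqrt_le : √(s + 1 / 2) ≤ 2 * s := Real.sqrt_le_iff.mpr ⟨by positivity, by nlinarith⟩
  refine le_of_mul_le_mul_left ?_ hs0
  calc s * Real.Gamma s = Real.Gamma (s + 1 / 2 + 1 / 2) := by
        rw [← Real.Gamma_add_one hs0.ne']; ring_nf
    _ ≤ √(s + 1 / 2) * Real.Gamma (s + 1 / 2) :=
      Gamma_add_half_le_sqrt_mul_Gamma (by positivity)
    _ ≤ 2 * s * Real.Gamma (s + 1 / 2) := by gcongr
    _ = s * (2 * Real.Gamma (s + 1 / 2)) := by ring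

end GammaHalfStep

/-- The sequence `Γ((j+1)/2)`, whose squares are the denominators in the series of
`occScalingW`. -/
noncomputable def halfGamma (j : ℕ) : ℝ :=
  Real.Gamma (((j : ℝ) + 1) / 2)

lemma halfGamma_pos (j : ℕ) : 0 < halfGamma j :=
  Real.Gamma_pos_of_pos (by positivity)

lemma halfGamma_zero : halfGamma 0 = √π := by
  rw [halfGamma, Nat.cast_zero, zero_add, Real.Gamma_one_half_eq]

lemma halfGamma_succ (j : ℕ) : halfGamma (j + 1) = Real.Gamma (((j : ℝ) + 1) / 2 + 1 / 2) := by
  rw [halfGamma]; push_cast; ring_nf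

lemma halfGamma_mul_halfGamma_succ (j : ℕ) :
    halfGamma j * halfGamma (j + 1) = √π * j.factorial / 2 ^ j := by
  have exponent : (1 : ℝ) - 2 * (((j : ℝ) + 1) / 2) = -j := by ring
  rw [halfGamma_succ, halfGamma, Real.Gamma_mul_Gamma_add_half, exponent,
    Real.rpow_neg zero_le_two, Real.rpow_natCast, mul_div_cancel₀ _ two_ne_zero,
    Real.Gamma_nat_eq_factorial]
  ring

lemma halfGamma_le_two_mul_halfGamma_succ (j : ℕ) :
    halfGamma j ≤ 2 * halfGamma (j + 1) := by
  rw [halfGamma_succ]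
  exact Gamma_le_two_mul_Gamma_add_half (by gcongr; simp)

lemma hasSum_pow_div_halfGamma_mul_halfGamma_succ (x : ℝ) :
    HasSum (fun j : ℕ ↦ x ^ j / (halfGamma j * halfGamma (j + 1))) (exp (2 * x) / √π) := by
  have exp_series := (NormedSpace.expSeries_div_hasSum_exp (2 * x)).div_const √π
  rw [← Real.exp_eq_exp_ℝ] at exp_series
  refine exp_series.congr_fun fun j ↦ ?_
  rw [halfGamma_mul_halfGamma_succ, mul_pow]
  field_simp

section SquareDenominators

variable {g : ℕ → ℝ} {u v C x A : ℝ}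

lemma pow_div_mul_le_mul_pow_div_sq (hu : 0 < u) (hv : 0 < v) (huv : u ≤ C * v) (hx : 0 ≤ x)
    (n : ℕ) : x ^ n / (u * v) ≤ C * (x ^ n / u ^ 2) :=
  calc x ^ n / (u * v) = x ^ n / (u ^ 2 * v) * u := by field_simp
    _ ≤ x ^ n / (u ^ 2 * v) * (C * v) := by gcongr
    _ = C * (x ^ n / u ^ 2) := by field_simp

lemma pow_div_sq_le_mul_pow_div_mul (hu : 0 < u) (hv : 0 < v) (huv : u ≤ C * v) (hx : 0 ≤ x)
    (n : ℕ) : x ^ n / v ^ 2 ≤ C * (x ^ n / (u * v)) :=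
  calc x ^ n / v ^ 2 = x ^ n / (u * v ^ 2) * u := by field_simp
    _ ≤ x ^ n / (u * v ^ 2) * (C * v) := by gcongr
    _ = C * (x ^ n / (u * v)) := by field_simp

lemma pow_succ_div_sq_succ_le (hg : ∀ j, 0 < g j) (hgC : ∀ j, g j ≤ C * g (j + 1)) (hx : 0 ≤ x)
    (j : ℕ) : x ^ (j + 1) / g (j + 1) ^ 2 ≤ C * x * (x ^ j / (g j * g (j + 1))) := by
  refine (pow_div_sq_le_mul_pow_div_mul (hg j) (hg (j + 1)) (hgC j) hx (j + 1)).trans_eq ?_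
  ring

lemma summable_pow_div_sq (hg : ∀ j, 0 < g j) (hgC : ∀ j, g j ≤ C * g (j + 1)) (hx : 0 ≤ x)
    (hA : Summable fun j ↦ x ^ j / (g j * g (j + 1))) :
    Summable fun j ↦ x ^ j / g j ^ 2 :=
  (summable_nat_add_iff 1).mp <| (hA.mul_left (C * x)).of_nonneg_of_le
    (fun _ ↦ by positivity) (pow_succ_div_sq_succ_le hg hgC hx)

lemma le_mul_tsum_pow_div_sq (hg : ∀ j, 0 < g j) (hgC : ∀ j, g j ≤ C * g (j + 1)) (hx : 0 ≤ x)
    (hA : HasSum (fun j ↦ x ^ j / (g j * g (j + 1))) A) :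
    A ≤ C * ∑' j, x ^ j / g j ^ 2 :=
  hasSum_le (fun j ↦ pow_div_mul_le_mul_pow_div_sq (hg j) (hg (j + 1)) (hgC j) hx j) hA
    ((summable_pow_div_sq hg hgC hx hA.summable).hasSum.mul_left C)

lemma tsum_pow_div_sq_le (hg : ∀ j, 0 < g j) (hgC : ∀ j, g j ≤ C * g (j + 1)) (hx : 0 ≤ x)
    (hA : HasSum (fun j ↦ x ^ j / (g j * g (j + 1))) A) :
    ∑' j, x ^ j / g j ^ 2 ≤ 1 / g 0 ^ 2 + C * x * A := by
  have summable_sq := summable_pow_div_sq hg hgC hx hA.summable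
  rw [summable_sq.tsum_eq_zero_add, pow_zero]
  gcongr
  exact hasSum_le (pow_succ_div_sq_succ_le hg hgC hx)
    ((summable_nat_add_iff 1).mpr summable_sq).hasSum (hA.mul_left (C * x))

end SquareDenominators

lemma occScalingW_eq (x : ℝ) : occScalingW x = x⁻¹ * ∑' j, x ^ j / halfGamma j ^ 2 := by
  simp only [occScalingW, halfGamma, one_div]

section ScalingFunction

variable {x : ℝ}

lemma le_occScalingW (hx : 0 < x) :
    1 / (2 * √π) * x ^ (-1 : ℝ) * exp (2 * x) ≤ occScalingW x := by
  have series_ge := le_mul_tsum_pow_div_sq halfGamma_pos halfGamma_le_two_mul_halfGamma_succ hx.le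
    (hasSum_pow_div_halfGamma_mul_halfGamma_succ x)
  calc 1 / (2 * √π) * x ^ (-1 : ℝ) * exp (2 * x) = x⁻¹ * (exp (2 * x) / √π / 2) := by
        rw [Real.rpow_neg_one]; field_simp
    _ ≤ occScalingW x := by
      rw [occScalingW_eq]
      gcongr
      linarith

lemma occScalingW_le (hx : 1 ≤ x) :
    occScalingW x ≤ (1 / π + 2 / √π) * exp (2 * x) := by
  have hx0 : 0 < x := by positivity
  have series_le := tsum_pow_div_sq_le halfGamma_pos halfGamma_le_two_mul_halfGamma_succ hx0.le
    (hasSum_pow_div_halfGamma_mul_halfGamma_succ x)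
  rw [halfGamma_zero, Real.sq_sqrt pi_pos.le] at series_le
  have one_le : 1 ≤ x * exp (2 * x) :=
    one_le_mul_of_one_le_of_one_le hx (Real.one_le_exp (by positivity))
  calc occScalingW x ≤ x⁻¹ * (1 / π * 1 + 2 * x * (exp (2 * x) / √π)) := by
        rw [occScalingW_eq, mul_one]; gcongr
    _ ≤ x⁻¹ * (1 / π * (x * exp (2 * x)) + 2 * x * (exp (2 * x) / √π)) := by gcongr
    _ = (1 / π + 2 / √π) * exp (2 * x) := by field_simp

lemma occScalingW_pos (hx : 0 < x) : 0 < occScalingW x :=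
  lt_of_lt_of_le (by positivity) (le_occScalingW hx)

end ScalingFunction

lemma tendsto_log_const_mul_rpow_mul_exp_div {c : ℝ} (hc : c ≠ 0) (p k : ℝ) :
    Tendsto (fun x ↦ log (c * x ^ p * exp (k * x)) / x) atTop (nhds k) := by
  have const_term : Tendsto (fun x ↦ log c / x) atTop (nhds 0) :=
    tendsto_const_nhds.div_atTop tendsto_id
  have log_term : Tendsto (fun x ↦ log x / x) atTop (nhds 0) :=
    Real.isLittleO_log_id_atTop.tendsto_div_nhds_zero
  have limit : Tendsto (fun x ↦ log c / x + p * (log x / x) + k) atTop (nhds k) := by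
    simpa using (const_term.add (log_term.const_mul p)).add_const k
  refine limit.congr' ?_
  filter_upwards [eventually_gt_atTop 0] with x hx
  rw [Real.log_mul (by positivity) (by positivity), Real.log_mul hc (by positivity),
    Real.log_rpow hx, Real.log_exp]
  field_simp

lemma tendsto_log_occScalingW_div :
    Tendsto (fun x ↦ log (occScalingW x) / x) atTop (nhds 2) := by
  have lower := tendsto_log_const_mul_rpow_mul_exp_div (c := 1 / (2 * √π)) (by positivity) (-1) 2
  have upper := tendsto_log_const_mul_rpow_mul_exp_div (c := 1 / π + 2 / √π) (by positivity) 0 2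
  simp only [Real.rpow_zero, mul_one] at upper
  refine tendsto_of_tendsto_of_tendsto_of_le_of_le' lower upper ?_ ?_
  · filter_upwards [eventually_gt_atTop 0] with x hx
    gcongr
    exact le_occScalingW hx
  · filter_upwards [eventually_ge_atTop 1] with x hx
    have := occScalingW_pos (zero_lt_one.trans_le hx)
    gcongr
    exact occScalingW_le hx

lemma tendsto_log_occScalingW_mul_div {c : ℝ} (hc : 0 < c) :
    Tendsto (fun T ↦ log (occScalingW (c * T)) / T) atTop (nhds (2 * c)) := by
  have rescaled := (tendsto_log_occScalingW_div.comp (tendsto_id.const_mul_atTop hc)).mul_const c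
  refine rescaled.congr fun T ↦ ?_
  simp only [Function.comp_apply, id_eq]
  field_simp

/-- **Large deviation rate of the occupation-time density**: for reset rate `r > 0` and
`a ∈ (0,1)`, `(1/T) log[(r/T) e^{-rT} W(rT√(a(1-a)))] → -r(1 - 2√(a(1-a)))` as `T → ∞`. -/
theorem occupation_density_ld_rate (r a : ℝ) (hr : 0 < r) (ha0 : 0 < a) (ha1 : a < 1) :
    Tendsto (fun T : ℝ =>
        (1 / T) * Real.log ((r / T) * Real.exp (-r * T)
          * occScalingW (r * T * Real.sqrt (a * (1 - a)))))
      atTop (nhds (-(r * (1 - 2 * Real.sqrt (a * (1 - a)))))) := by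
  set q := √(a * (1 - a))
  have hq : 0 < q := Real.sqrt_pos.mpr (mul_pos ha0 (sub_pos.mpr ha1))
  have hc : 0 < r * q := mul_pos hr hq
  have prefactor := tendsto_log_const_mul_rpow_mul_exp_div hr.ne' (-1) (-r)
  have scaling := tendsto_log_occScalingW_mul_div hc
  rw [show -(r * (1 - 2 * q)) = -r + 2 * (r * q) by ring]
  refine (prefactor.add scaling).congr' ?_
  filter_upwards [eventually_gt_atTop 0] with T hT
  have hW : occScalingW (r * q * T) ≠ 0 := (occScalingW_pos (mul_pos hc hT)).ne'
  rw [Real.rpow_neg_one, ← div_eq_mul_inv, mul_right_comm r T q, ← add_div,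
    ← Real.log_mul (by positivity) hW, one_div_mul_eq_div]
end

section
/- Fix r > 0 and define λ_r : ℝ → ℝ by λ_r(k) = (1/2)(k − 2r + √(k² + 4r²)). Then for every a ∈ [0,1], the Legendre transform of λ_r at a satisfies sup_{k ∈ ℝ} [ k·a − λ_r(k) ] = r(1 − 2√(a(1−a))). -/
open Real

/-- The scaled cumulant generating function of the positive occupation time of
reset Brownian motion with reset rate `r`: `λ_r(k) = (1/2)(k - 2r + √(k² + 4r²))`. -/
noncomputable def lambdaOcc (r k : ℝ) : ℝ :=
  (1 / 2) * (k - 2 * r + Real.sqrt (k ^ 2 + 4 * r ^ 2))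

/-!
In the Hilbert sum `E × ℝ`, the number `√(‖x‖² + c²)` is the norm of `(x, |c|)`, and a vector `p`
of the unit ball of `E` lifts to the unit vector `(p, √(1 - ‖p‖²))`. Cauchy–Schwarz for these two
vectors bounds `⟪p, x⟫ - √(‖x‖² + c²)` by `-|c| √(1 - ‖p‖²)`. The bound is attained where the two
vectors are parallel, which is possible when `‖p‖ < 1`; when `‖p‖ = 1` it is approached along
`x = t p` as `t → ∞`. Up to an affine change, `λ_r` is the case `E = ℝ`, `c = 2 r`, and the slope
`a ∈ [0, 1]` corresponds to `p = 2 a - 1 ∈ [-1, 1]`.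
-/

open Set Filter Topology
open scoped RealInnerProductSpace

section SqrtNormSqAddSq

variable {E : Type*} [NormedAddCommGroup E] [InnerProductSpace ℝ E]

theorem inner_add_mul_le_sqrt_mul_sqrt (p x : E) (s c : ℝ) :
    ⟪p, x⟫ + s * c ≤ √(‖p‖ ^ 2 + s ^ 2) * √(‖x‖ ^ 2 + c ^ 2) := by
  simpa [WithLp.prod_norm_eq_of_L2, mul_comm c] using
    real_inner_le_norm (WithLp.toLp 2 (p, s)) (WithLp.toLp 2 (x, c))

theorem inner_sub_sqrt_norm_sq_add_sq_le {p : E} (hp : ‖p‖ ≤ 1) (x : E) (c : ℝ) :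
    ⟪p, x⟫ - √(‖x‖ ^ 2 + c ^ 2) ≤ -(|c| * √(1 - ‖p‖ ^ 2)) := by
  have hlift : ‖p‖ ^ 2 + √(1 - ‖p‖ ^ 2) ^ 2 = 1 := by
    rw [Real.sq_sqrt (sub_nonneg.2 (pow_le_one₀ (norm_nonneg p) hp)), add_sub_cancel]
  have hcs := inner_add_mul_le_sqrt_mul_sqrt p x √(1 - ‖p‖ ^ 2) |c|
  rw [hlift, Real.sqrt_one, one_mul, sq_abs] at hcs
  linarith

theorem inner_sub_sqrt_norm_sq_add_sq_eq {p : E} (hp : ‖p‖ < 1) (c : ℝ) :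
    ⟪p, (|c| / √(1 - ‖p‖ ^ 2)) • p⟫ - √(‖(|c| / √(1 - ‖p‖ ^ 2)) • p‖ ^ 2 + c ^ 2) =
      -(|c| * √(1 - ‖p‖ ^ 2)) := by
  have hpos : 0 < 1 - ‖p‖ ^ 2 := sub_pos.2 (pow_lt_one₀ (norm_nonneg p) hp two_ne_zero)
  set s := √(1 - ‖p‖ ^ 2)
  have hs_pos : 0 < s := Real.sqrt_pos.2 hpos
  have hs_sq : s ^ 2 = 1 - ‖p‖ ^ 2 := Real.sq_sqrt hpos.le
  have hnorm : ‖(|c| / s) • p‖ ^ 2 + c ^ 2 = (|c| / s) ^ 2 := by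
    rw [norm_smul, mul_pow, Real.norm_eq_abs, sq_abs, ← sq_abs c]
    field_simp
    linear_combination |c| ^ 2 * hs_sq
  rw [hnorm, Real.sqrt_sq (by positivity), real_inner_smul_right, real_inner_self_eq_norm_sq]
  field_simp
  linear_combination |c| * hs_sq

theorem tendsto_sub_sqrt_sq_add_sq_atTop (c : ℝ) :
    Tendsto (fun t : ℝ ↦ t - √(t ^ 2 + c ^ 2)) atTop (𝓝 0) := by
  have hlower : Tendsto (fun t : ℝ ↦ -c ^ 2 / t) atTop (𝓝 0) :=
    tendsto_const_nhds.div_atTop tendsto_id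
  refine tendsto_of_tendsto_of_tendsto_of_le_of_le' hlower tendsto_const_nhds ?_ ?_
  · filter_upwards [eventually_gt_atTop 0] with t ht
    have hsqrt : √(t ^ 2 + c ^ 2) ≤ t + c ^ 2 / t := by
      refine Real.sqrt_le_iff.2 ⟨by positivity, ?_⟩
      calc t ^ 2 + c ^ 2 ≤ t ^ 2 + c ^ 2 + (c ^ 2 + (c ^ 2 / t) ^ 2) :=
            le_add_of_nonneg_right (by positivity)
        _ = (t + c ^ 2 / t) ^ 2 := by field_simp
    rw [neg_div]
    linarith
  · exact .of_forall fun t ↦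
      sub_nonpos.2 (Real.le_sqrt_of_sq_le (le_add_of_nonneg_right (sq_nonneg c)))

theorem isLUB_range_inner_sub_sqrt_norm_sq_add_sq {p : E} (hp : ‖p‖ ≤ 1) (c : ℝ) :
    IsLUB (range fun x : E ↦ ⟪p, x⟫ - √(‖x‖ ^ 2 + c ^ 2)) (-(|c| * √(1 - ‖p‖ ^ 2))) := by
  refine isLUB_of_mem_closure
    (forall_mem_range.2 fun x ↦ inner_sub_sqrt_norm_sq_add_sq_le hp x c) ?_
  rcases hp.lt_or_eq with hlt | heq
  · exact subset_closure ⟨_, inner_sub_sqrt_norm_sq_add_sq_eq hlt c⟩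
  · have hray (t : ℝ) : ⟪p, t • p⟫ - √(‖t • p‖ ^ 2 + c ^ 2) = t - √(t ^ 2 + c ^ 2) := by
      simp [real_inner_smul_right, norm_smul, heq]
    have hlim : -(|c| * √(1 - ‖p‖ ^ 2)) = 0 := by simp [heq]
    rw [hlim]
    exact mem_closure_of_tendsto (tendsto_sub_sqrt_sq_add_sq_atTop c)
      (.of_forall fun t ↦ ⟨t • p, hray t⟩)

end SqrtNormSqAddSq

theorem mul_sub_lambdaOcc (r a k : ℝ) :
    k * a - lambdaOcc r k =
      r + 1 / 2 * (⟪2 * a - 1, k⟫ - √(‖k‖ ^ 2 + (2 * r) ^ 2)) := by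
  have hsq : (2 * r) ^ 2 = 4 * r ^ 2 := by ring
  rw [lambdaOcc, RCLike.inner_apply', conj_trivial, Real.norm_eq_abs, sq_abs, hsq]
  ring

theorem sqrt_one_sub_norm_two_mul_sub_one_sq (a : ℝ) :
    √(1 - ‖2 * a - 1‖ ^ 2) = 2 * √(a * (1 - a)) := by
  have hsq : 1 - (2 * a - 1) ^ 2 = 2 ^ 2 * (a * (1 - a)) := by ring
  rw [Real.norm_eq_abs, sq_abs, hsq, Real.sqrt_mul (by positivity), Real.sqrt_sq zero_le_two]

theorem isLUB_range_mul_sub_lambdaOcc (r : ℝ) {a : ℝ} (ha0 : 0 ≤ a) (ha1 : a ≤ 1) :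
    IsLUB (range fun k ↦ k * a - lambdaOcc r k) (r - 2 * |r| * √(a * (1 - a))) := by
  have hvalue : r + 1 / 2 * -(|2 * r| * √(1 - ‖2 * a - 1‖ ^ 2)) =
      r - 2 * |r| * √(a * (1 - a)) := by
    rw [sqrt_one_sub_norm_two_mul_sub_one_sq, abs_mul, abs_two]
    ring
  have hslope : ‖2 * a - 1‖ ≤ 1 := abs_le.2 ⟨by linarith, by linarith⟩
  have hscaled := (isLUB_range_inner_sub_sqrt_norm_sq_add_sq hslope (2 * r)).mul_left
    (one_half_pos (α := ℝ)).le
  have hshifted := (OrderIso.addLeft r).isLUB_image'.2 hscaled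
  simpa only [← range_comp, Function.comp_def, OrderIso.addLeft_apply, ← mul_sub_lambdaOcc,
    hvalue] using hshifted

/-- **Legendre transform of the occupation-time SCGF**: for `r > 0` and `a ∈ [0,1]`,
`sup_k [k·a - λ_r(k)] = r(1 - 2√(a(1-a)))`, the large deviation rate function of the
occupation-time fraction of reset Brownian motion. -/
theorem legendre_lambdaOcc (r a : ℝ) (hr : 0 < r) (ha0 : 0 ≤ a) (ha1 : a ≤ 1) :
    (⨆ k : ℝ, (k * a - lambdaOcc r k)) = r * (1 - 2 * Real.sqrt (a * (1 - a))) := by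
  rw [(isLUB_range_mul_sub_lambdaOcc r ha0 ha1).ciSup_eq, abs_of_pos hr]
  ring
end

section
/- For all r > 0 and s > 0, ∫₀^∞ e^{−sT} · (1/r⁶)·( 12(rT)² + 120 rT − 840 + e^{−rT}[ 9(rT)⁴ + 68(rT)³ + 288(rT)² + 720 rT + 840 ] ) dT = 24·(r + 10s) / ( s³ (r+s)⁵ ). -/
open MeasureTheory Set Real

/-!
The integrand is a polynomial plus `e^{-rT}` times a polynomial. Damping by `e^{-rT}` translates a
Laplace transform by `r`, and the transform of `T ^ n` is `n! / z ^ (n + 1)`, so the integral is a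
combination of powers of `1 / s` and `1 / (r + s)`: the partial fraction expansion of the right-hand
side. The transforms of successive powers are related by the rule `ℒ[f'](z) = z ℒ[f](z) - f 0`.
-/

lemma hasDerivAt_exp_neg_mul_smul {E : Type*} [NormedAddCommGroup E] [NormedSpace ℂ E]
    {f : ℝ → E} {f' : E} {T : ℝ} (z : ℂ) (hf : HasDerivAt f f' T) :
    HasDerivAt (fun T : ℝ => Complex.exp (-z * T) • f T)
      (Complex.exp (-z * T) • f' - z • Complex.exp (-z * T) • f T) T := by
  have exp_deriv : HasDerivAt (fun T : ℝ => Complex.exp (-z * T))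
      (Complex.exp (-z * T) * -z) T := by
    simpa using ((hasDerivAt_id T).ofReal_comp.const_mul (-z)).cexp
  exact (exp_deriv.fun_smul hf).congr_deriv (by module)

/-- `HasLaplaceTransform f z L` says that the Laplace transform `∫₀^∞ e^{-zT} f(T) dT` converges
absolutely and equals `L`, in the manner of `HasMellin` and `HasSum`. -/
def HasLaplaceTransform {E : Type*} [NormedAddCommGroup E] [NormedSpace ℂ E]
    (f : ℝ → E) (z : ℂ) (L : E) : Prop :=
  IntegrableOn (fun T : ℝ => Complex.exp (-z * T) • f T) (Ioi 0) ∧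
    ∫ T : ℝ in Ioi 0, Complex.exp (-z * T) • f T = L

namespace HasLaplaceTransform

variable {E : Type*} [NormedAddCommGroup E] [NormedSpace ℂ E] {f g : ℝ → E} {z : ℂ} {L M : E}

lemma add (hf : HasLaplaceTransform f z L) (hg : HasLaplaceTransform g z M) :
    HasLaplaceTransform (fun T => f T + g T) z (L + M) := by
  simp only [HasLaplaceTransform, smul_add]
  exact ⟨hf.1.fun_add hg.1, by rw [integral_add hf.1 hg.1, hf.2, hg.2]⟩

lemma const_smul (hf : HasLaplaceTransform f z L) (c : ℂ) :
    HasLaplaceTransform (fun T => c • f T) z (c • L) := by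
  simp only [HasLaplaceTransform, smul_comm _ c]
  exact ⟨hf.1.fun_smul c, by rw [integral_smul, hf.2]⟩

lemma sum {ι : Type*} {I : Finset ι} {f : ι → ℝ → E} {L : ι → E}
    (hf : ∀ i ∈ I, HasLaplaceTransform (f i) z (L i)) :
    HasLaplaceTransform (fun T => ∑ i ∈ I, f i T) z (∑ i ∈ I, L i) := by
  simp only [HasLaplaceTransform, Finset.smul_sum]
  refine ⟨integrable_finsetSum I fun i hi => (hf i hi).1, ?_⟩
  rw [integral_finsetSum I fun i hi => (hf i hi).1]
  exact Finset.sum_congr rfl fun i hi => (hf i hi).2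

lemma exp_neg_smul {w : ℂ} (hf : HasLaplaceTransform f (w + z) L) :
    HasLaplaceTransform (fun T => Complex.exp (-w * T) • f T) z L := by
  have exp_shift (T : ℝ) :
      Complex.exp (-z * T) * Complex.exp (-w * T) = Complex.exp (-(w + z) * T) := by
    rw [← Complex.exp_add]
    ring_nf
  simpa only [HasLaplaceTransform, smul_smul, exp_shift] using hf

lemma of_hasDerivAt [CompleteSpace E] {f' : ℝ → E} (hf : HasLaplaceTransform f z L)
    (hcont : ContinuousWithinAt f (Ici 0) 0) (hderiv : ∀ T ∈ Ioi 0, HasDerivAt f (f' T) T)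
    (hf' : IntegrableOn (fun T : ℝ => Complex.exp (-z * T) • f' T) (Ioi 0)) :
    HasLaplaceTransform f' z (z • L - f 0) := by
  have kernel_cont : Continuous fun T : ℝ => Complex.exp (-z * T) := by fun_prop
  have product_deriv (T : ℝ) (hT : T ∈ Ioi 0) :=
    hasDerivAt_exp_neg_mul_smul z (hderiv T hT)
  have hzf := hf.1.fun_smul z
  have product_tendsto :
      Filter.Tendsto (fun T : ℝ => Complex.exp (-z * T) • f T) Filter.atTop (nhds 0) :=
    tendsto_zero_of_hasDerivAt_of_integrableOn_Ioi product_deriv (hf'.fun_sub hzf) hf.1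
  have boundary := integral_Ioi_of_hasDerivAt_of_tendsto
    (kernel_cont.continuousWithinAt.smul hcont) product_deriv (hf'.fun_sub hzf) product_tendsto
  rw [integral_sub hf' hzf, integral_smul, hf.2, sub_eq_iff_eq_add] at boundary
  exact ⟨hf', by simpa [neg_add_eq_sub] using boundary⟩

end HasLaplaceTransform

lemma integrableOn_exp_neg_mul_mul_pow {z : ℂ} (hz : 0 < z.re) (n : ℕ) :
    IntegrableOn (fun T : ℝ => Complex.exp (-z * T) * (T : ℂ) ^ n) (Ioi 0) := by
  have real_integrable : IntegrableOn (fun T : ℝ => T ^ n * rexp (-z.re * T)) (Ioi 0) := by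
    simpa using integrableOn_rpow_mul_exp_neg_mul_rpow (s := n)
      (neg_one_lt_zero.trans_le n.cast_nonneg) one_pos hz
  refine real_integrable.congr' (by fun_prop) ?_
  filter_upwards [ae_restrict_mem measurableSet_Ioi] with T hT
  simp [Complex.norm_exp, abs_of_pos (mem_Ioi.mp hT), mul_comm]

lemma hasLaplaceTransform_pow {z : ℂ} (hz : 0 < z.re) (n : ℕ) :
    HasLaplaceTransform (fun T => (T : ℂ) ^ n) z (n.factorial / z ^ (n + 1)) := by
  have hz₀ : z ≠ 0 := Complex.ne_zero_of_re_pos hz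
  refine ⟨integrableOn_exp_neg_mul_mul_pow hz n, ?_⟩
  induction n with
  | zero => simpa using integral_exp_mul_complex_Ioi (a := -z) (by simpa) 0
  | succ n ih =>
    have pow_n : HasLaplaceTransform (fun T => (n + 1 : ℂ) • (T : ℂ) ^ n) z _ := .const_smul
      ⟨integrableOn_exp_neg_mul_mul_pow hz n, ih⟩ (n + 1 : ℂ)
    have pow_succ_deriv : ∀ T : ℝ,
        HasDerivAt (fun T : ℝ => (T : ℂ) ^ (n + 1)) ((n + 1 : ℂ) • (T : ℂ) ^ n) T := fun T => by
      simpa using (hasDerivAt_id T).ofReal_comp.fun_pow (n + 1)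
    have pow_succ_rule := HasLaplaceTransform.of_hasDerivAt
      ⟨integrableOn_exp_neg_mul_mul_pow hz (n + 1), rfl⟩ (by fun_prop)
      (fun T _ => pow_succ_deriv T) pow_n.1
    have recurrence : z * (∫ T : ℝ in Ioi 0, Complex.exp (-z * T) * (T : ℂ) ^ (n + 1)) =
        (n + 1) * (n.factorial / z ^ (n + 1)) := by
      simpa using pow_succ_rule.2.symm.trans pow_n.2
    simp only [smul_eq_mul]
    rw [Nat.factorial_succ, Nat.cast_mul, Nat.cast_succ]
    field_simp at recurrence ⊢
    linear_combination recurrence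

lemma hasLaplaceTransform_sum_mul_pow {z : ℂ} (hz : 0 < z.re) {n : ℕ} (a : Fin n → ℂ) :
    HasLaplaceTransform (fun T => ∑ k, a k * (T : ℂ) ^ (k : ℕ)) z
      (∑ k, a k * ((k : ℕ).factorial / z ^ ((k : ℕ) + 1))) :=
  .sum fun k _ => (hasLaplaceTransform_pow hz k).const_smul (a k)

theorem laplace_area_fourth_moment_general {r s : ℂ} (hr : r ≠ 0) (hs : 0 < s.re)
    (hrs : 0 < (r + s).re) :
    HasLaplaceTransform
      (fun T => (1 / r ^ 6) * (12 * (r * T) ^ 2 + 120 * (r * T) - 840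
        + Complex.exp (-r * T) * (9 * (r * T) ^ 4 + 68 * (r * T) ^ 3
            + 288 * (r * T) ^ 2 + 720 * (r * T) + 840)))
      s (24 * (r + 10 * s) / (s ^ 3 * (r + s) ^ 5)) := by
  have hs₀ : s ≠ 0 := Complex.ne_zero_of_re_pos hs
  have hrs₀ : r + s ≠ 0 := Complex.ne_zero_of_re_pos hrs
  have polynomial_part := hasLaplaceTransform_sum_mul_pow hs ![-840, 120 * r, 12 * r ^ 2]
  have damped_part := (hasLaplaceTransform_sum_mul_pow hrs
    ![840, 720 * r, 288 * r ^ 2, 68 * r ^ 3, 9 * r ^ 4]).exp_neg_smul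
  convert (polynomial_part.add damped_part).const_smul (1 / r ^ 6) using 1
  · funext T
    rw [smul_eq_mul]
    congr 1
    simp only [Fin.sum_univ_three, Fin.sum_univ_five, Matrix.cons_val, Fin.coe_ofNat_eq_mod,
      smul_eq_mul]
    ring
  · simp only [Fin.sum_univ_three, Fin.sum_univ_five, Matrix.cons_val, Fin.coe_ofNat_eq_mod,
      Nat.factorial, smul_eq_mul]
    push_cast
    field_simp
    ring

/-- **Laplace transform of the fourth moment of the area of reset Brownian motion**
(Theorem 5): for `r, s > 0`,
`∫₀^∞ e^{-sT} (1/r⁶)(12(rT)² + 120rT - 840 + e^{-rT}[9(rT)⁴ + 68(rT)³ + 288(rT)² + 720rT + 840]) dT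
  = 24(r + 10s)/(s³(r+s)⁵)`. -/
theorem laplace_area_fourth_moment (r s : ℝ) (hr : 0 < r) (hs : 0 < s) :
    (∫ T in Ioi (0:ℝ), Real.exp (-s * T) *
        ((1 / r ^ 6) * (12 * (r * T) ^ 2 + 120 * (r * T) - 840
          + Real.exp (-r * T) * (9 * (r * T) ^ 4 + 68 * (r * T) ^ 3
              + 288 * (r * T) ^ 2 + 720 * (r * T) + 840))))
      = 24 * (r + 10 * s) / (s ^ 3 * (r + s) ^ 5) := by
  have h := (laplace_area_fourth_moment_general (Complex.ofReal_ne_zero.mpr hr.ne') hs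
    (add_pos hr hs : 0 < ((r : ℂ) + s).re)).2
  simp only [smul_eq_mul] at h
  exact_mod_cast h
end

section
/- Let (Ω, ℱ, P) be a probability space, let C ∈ (0,∞), let T > 0, and let h : [0,∞) × Ω → [0,∞) be jointly measurable with E[h_t] < ∞ and E[h_t²] ≤ C·(E[h_t])² for every t ≥ 0. Then E[ ( ∫₀^T h_t dt )² ] ≤ C · ( E[ ∫₀^T h_t dt ] )². -/
open MeasureTheory Set ENNReal

/-!
The square of `∫ f_s ds` is the double integral of `f_s f_t`, so Tonelli's theorem turns the second
moment into the double integral of `E[f_s f_t]`. By the Cauchy–Schwarz inequality the pointwise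
bound passes to the off-diagonal moments, `E[f_s f_t] ≤ C E[f_s] E[f_t]`, and the right-hand side
factors when integrated over `s` and `t`.
-/

section

variable {α β Ω : Type*} [MeasurableSpace α] [MeasurableSpace β] [MeasurableSpace Ω]

theorem lintegral_mul_le_of_lintegral_rpow_le {P : Measure Ω} {p q : ℝ} (hpq : p.HolderConjugate q)
    {f g : Ω → ℝ≥0∞} (hf : AEMeasurable f P) (hg : AEMeasurable g P) {C a b : ℝ≥0∞}
    (hfa : ∫⁻ ω, f ω ^ p ∂P ≤ C * a ^ p) (hgb : ∫⁻ ω, g ω ^ q ∂P ≤ C * b ^ q) :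
    ∫⁻ ω, f ω * g ω ∂P ≤ C * (a * b) := by
  have hp : 0 ≤ 1 / p := hpq.one_div_nonneg
  have hq : 0 ≤ 1 / q := hpq.symm.one_div_nonneg
  have hC : C ^ (1 / p) * C ^ (1 / q) = C := by
    rw [← rpow_add_of_nonneg _ _ hp hq, one_div, one_div, hpq.inv_add_inv_eq_one, rpow_one]
  calc ∫⁻ ω, f ω * g ω ∂P
      ≤ (∫⁻ ω, f ω ^ p ∂P) ^ (1 / p) * (∫⁻ ω, g ω ^ q ∂P) ^ (1 / q) :=
        lintegral_mul_le_Lp_mul_Lq P hpq hf hg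
    _ ≤ (C * a ^ p) ^ (1 / p) * (C * b ^ q) ^ (1 / q) := by gcongr
    _ = (C ^ (1 / p) * a) * (C ^ (1 / q) * b) := by
        rw [mul_rpow_of_nonneg _ _ hp, mul_rpow_of_nonneg _ _ hq, one_div, one_div,
          rpow_rpow_inv hpq.ne_zero, rpow_rpow_inv hpq.symm.ne_zero]
    _ = C * (a * b) := by rw [mul_mul_mul_comm, hC]

theorem lintegral_lintegral_mul_lintegral_swap {μ : Measure α} {ν : Measure β} {P : Measure Ω}
    [SFinite μ] [SFinite ν] [SFinite P] {f : α → Ω → ℝ≥0∞} {g : β → Ω → ℝ≥0∞}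
    (hf : Measurable (Function.uncurry f)) (hg : Measurable (Function.uncurry g)) :
    ∫⁻ ω, (∫⁻ s, f s ω ∂μ) * (∫⁻ t, g t ω ∂ν) ∂P = ∫⁻ s, ∫⁻ t, ∫⁻ ω, f s ω * g t ω ∂P ∂ν ∂μ :=
  calc ∫⁻ ω, (∫⁻ s, f s ω ∂μ) * (∫⁻ t, g t ω ∂ν) ∂P
      = ∫⁻ ω, ∫⁻ s, f s ω * ∫⁻ t, g t ω ∂ν ∂μ ∂P :=
        lintegral_congr fun ω => (lintegral_mul_const _ hf.of_uncurry_right).symm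
    _ = ∫⁻ s, ∫⁻ ω, f s ω * ∫⁻ t, g t ω ∂ν ∂P ∂μ :=
        lintegral_lintegral_swap (by fun_prop)
    _ = ∫⁻ s, ∫⁻ ω, ∫⁻ t, f s ω * g t ω ∂ν ∂P ∂μ :=
        lintegral_congr fun s => lintegral_congr fun ω =>
          (lintegral_const_mul _ hg.of_uncurry_right).symm
    _ = ∫⁻ s, ∫⁻ t, ∫⁻ ω, f s ω * g t ω ∂P ∂ν ∂μ :=
        lintegral_congr fun s => lintegral_lintegral_swap (by fun_prop)

theorem second_moment_domination_time_integral_general {μ : Measure α} {P : Measure Ω}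
    [SFinite μ] [SFinite P] {f : α → Ω → ℝ≥0∞} (hf : Measurable (Function.uncurry f)) {C : ℝ≥0∞}
    (hdom : ∀ᵐ t ∂μ, ∫⁻ ω, f t ω ^ 2 ∂P ≤ C * (∫⁻ ω, f t ω ∂P) ^ 2) :
    ∫⁻ ω, (∫⁻ t, f t ω ∂μ) ^ 2 ∂P ≤ C * (∫⁻ ω, ∫⁻ t, f t ω ∂μ ∂P) ^ 2 := by
  have hmean : Measurable fun t => ∫⁻ ω, f t ω ∂P := hf.lintegral_prod_right
  have hcross : ∀ᵐ s ∂μ, ∀ᵐ t ∂μ,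
      ∫⁻ ω, f s ω * f t ω ∂P ≤ C * ((∫⁻ ω, f s ω ∂P) * ∫⁻ ω, f t ω ∂P) := by
    filter_upwards [hdom] with s hs
    filter_upwards [hdom] with t ht
    exact lintegral_mul_le_of_lintegral_rpow_le .two_two hf.of_uncurry_left.aemeasurable
      hf.of_uncurry_left.aemeasurable (by simpa only [rpow_two] using hs)
      (by simpa only [rpow_two] using ht)
  calc ∫⁻ ω, (∫⁻ t, f t ω ∂μ) ^ 2 ∂P
      = ∫⁻ s, ∫⁻ t, ∫⁻ ω, f s ω * f t ω ∂P ∂μ ∂μ := by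
        simp only [sq, lintegral_lintegral_mul_lintegral_swap hf hf]
    _ ≤ ∫⁻ s, ∫⁻ t, C * ((∫⁻ ω, f s ω ∂P) * ∫⁻ ω, f t ω ∂P) ∂μ ∂μ :=
        lintegral_mono_ae (hcross.mono fun _ => lintegral_mono_ae)
    _ = C * ∫⁻ s, ∫⁻ t, (∫⁻ ω, f s ω ∂P) * ∫⁻ ω, f t ω ∂P ∂μ ∂μ := by
        rw [← lintegral_const_mul _ (by fun_prop)]
        exact lintegral_congr fun s => lintegral_const_mul _ (by fun_prop)
    _ = C * (∫⁻ t, ∫⁻ ω, f t ω ∂P ∂μ) ^ 2 := by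
        rw [lintegral_lintegral_mul hmean.aemeasurable hmean.aemeasurable, sq]
    _ = C * (∫⁻ ω, ∫⁻ t, f t ω ∂μ ∂P) ^ 2 := by
        rw [lintegral_lintegral_swap hf.aemeasurable]

end

/-- **Second-moment domination passes to time integrals** (key estimate (33) in the proof
of the zero-one law, Lemma 1): if a jointly measurable nonnegative process `h` on
`[0,∞) × Ω` has finite means and satisfies `E[h_t²] ≤ C (E[h_t])²` for every `t ≥ 0`,
then the time-integrated process `F_T = ∫₀^T h_t dt` satisfies
`E[F_T²] ≤ C (E[F_T])²`. All integrals are Lebesgue integrals of nonnegative functions. -/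
theorem second_moment_domination_time_integral
    {Ω : Type*} [MeasurableSpace Ω] (P : Measure Ω) [IsProbabilityMeasure P]
    (C : ℝ) (hC : 0 < C) (T : ℝ) (hT : 0 < T)
    (h : ℝ → Ω → ℝ) (hmeas : Measurable (Function.uncurry h))
    (hnn : ∀ t, 0 ≤ t → ∀ ω, 0 ≤ h t ω)
    (hfin : ∀ t, 0 ≤ t → (∫⁻ ω, ENNReal.ofReal (h t ω) ∂P) < ⊤)
    (hdom : ∀ t, 0 ≤ t →
      (∫⁻ ω, ENNReal.ofReal ((h t ω) ^ 2) ∂P)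
        ≤ ENNReal.ofReal C * (∫⁻ ω, ENNReal.ofReal (h t ω) ∂P) ^ 2) :
    (∫⁻ ω, (∫⁻ t in Ioc (0:ℝ) T, ENNReal.ofReal (h t ω)) ^ 2 ∂P)
      ≤ ENNReal.ofReal C * (∫⁻ ω, (∫⁻ t in Ioc (0:ℝ) T, ENNReal.ofReal (h t ω)) ∂P) ^ 2 :=
  second_moment_domination_time_integral_general (f := fun t ω => ENNReal.ofReal (h t ω))
    hmeas.ennreal_ofReal <|
    ae_restrict_of_forall_mem measurableSet_Ioc fun t ht => by
      simpa only [ofReal_pow (hnn t ht.1.le _)] using hdom t ht.1.le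
end

section
/- Define f₁ : (0,∞) → ℝ by f₁(ρ) = (1/√(2π))·[ e^{−ρ}/ρ + (√π / (2ρ^{3/2}))·(2ρ − 1)·erf(√ρ) ], where erf(x) = (2/√π)∫₀^x e^{−t²} dt is the error function. Then for all r > 0 and s > 0, ∫₀^∞ e^{−sT} · T^{3/2} · f₁(rT) dT = 1 / ( √2 · s² · √(s+r) ). -/
open MeasureTheory Set Real

/-- The error function `erf(x) = (2/√π) ∫₀^x e^{-t²} dt`. -/
noncomputable def errorFun (x : ℝ) : ℝ :=
  (2 / Real.sqrt π) * ∫ t in (0:ℝ)..x, Real.exp (-t ^ 2)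

/-- The function `f₁` giving the mean of the absolute area of reset Brownian motion via
`E_r[C_T] = T^{3/2} f₁(rT)` (Theorem 7). -/
noncomputable def absAreaF1 (ρ : ℝ) : ℝ :=
  (1 / Real.sqrt (2 * π)) *
    (Real.exp (-ρ) / ρ + (Real.sqrt π / (2 * ρ ^ ((3:ℝ)/2))) * (2 * ρ - 1) * errorFun (Real.sqrt ρ))

/-!
Put `h(ρ) = ρ^{3/2} f₁(ρ)`. Then `h(0) = 0` and `h'(ρ) = erf(√ρ) / √2`, while `erf(√ρ)` vanishes
at `0` and has derivative `e^{-ρ} / √(πρ)`. Laplace transforms turn each differentiation into a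
multiplication by `s`, so the transform of `h` is `s⁻²` times that of `e^{-ρ} / √(2πρ)`, which is
the Gamma integral `1 / √(2(s + 1))`. Finally `T^{3/2} f₁(rT) = r^{-3/2} h(rT)`, so general `r` is
a rescaling of `r = 1`.
-/

section Laplace

variable {E : Type*} [NormedAddCommGroup E] [NormedSpace ℝ E] {f g : ℝ → E} {s : ℝ} {a b : E}

/-- `HasLaplace f s a` says that the Laplace transform `∫₀^∞ e^{-st} f(t) dt` converges absolutely
and equals `a`; this is the analogue of `HasMellin`. -/
def HasLaplace (f : ℝ → E) (s : ℝ) (a : E) : Prop :=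
  IntegrableOn (fun t => exp (-s * t) • f t) (Ioi 0) ∧ ∫ t in Ioi 0, exp (-s * t) • f t = a

namespace HasLaplace

lemma congr (hf : HasLaplace f s a) (hfg : EqOn f g (Ioi 0)) : HasLaplace g s a := by
  have h : EqOn (fun t => exp (-s * t) • f t) (fun t => exp (-s * t) • g t) (Ioi 0) :=
    fun t ht => congrArg (exp (-s * t) • ·) (hfg ht)
  exact ⟨hf.1.congr_fun h measurableSet_Ioi,
    (setIntegral_congr_fun measurableSet_Ioi h).symm.trans hf.2⟩

lemma add (hf : HasLaplace f s a) (hg : HasLaplace g s b) :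
    HasLaplace (fun t => f t + g t) s (a + b) := by
  simp only [HasLaplace, smul_add]
  exact ⟨hf.1.add hg.1, by rw [integral_add hf.1 hg.1, hf.2, hg.2]⟩

lemma const_smul (hf : HasLaplace f s a) (c : ℝ) : HasLaplace (fun t => c • f t) s (c • a) := by
  simp only [HasLaplace, smul_comm _ c]
  exact ⟨hf.1.smul c, by rw [integral_smul, hf.2]⟩

lemma exp_smul {c : ℝ} (hf : HasLaplace f (s + c) a) :
    HasLaplace (fun t => exp (-c * t) • f t) s a := by
  simpa only [HasLaplace, smul_smul, ← exp_add, ← add_mul, ← neg_add] using hf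

lemma comp_mul_left {c : ℝ} (hc : 0 < c) (hf : HasLaplace f (s / c) a) :
    HasLaplace (fun t => f (c * t)) s (c⁻¹ • a) := by
  have hexp (t : ℝ) : exp (-s * t) = exp (-(s / c) * (c * t)) := by
    congr 1
    field_simp
  simp only [HasLaplace, hexp]
  constructor
  · rw [integrableOn_Ioi_comp_mul_left_iff (fun t => exp (-(s / c) * t) • f t) 0 hc, mul_zero]
    exact hf.1
  · rw [integral_comp_mul_left_Ioi (fun t => exp (-(s / c) * t) • f t) 0 hc, mul_zero, hf.2]

lemma const [CompleteSpace E] (hs : 0 < s) (c : E) : HasLaplace (fun _ => c) s (s⁻¹ • c) := by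
  have hs' : -s < 0 := neg_lt_zero.mpr hs
  refine ⟨(integrableOn_exp_mul_Ioi hs' 0).smul_const c, ?_⟩
  rw [integral_smul_const, integral_exp_mul_Ioi hs', mul_zero, exp_zero, neg_div_neg_eq, one_div]

lemma rpow {p : ℝ} (hp : 0 < p) (hs : 0 < s) :
    HasLaplace (fun t => t ^ (p - 1)) s (Gamma p / s ^ p) := by
  simp only [HasLaplace, smul_eq_mul, mul_comm (exp _)]
  constructor
  · simpa only [rpow_one] using
      integrableOn_rpow_mul_exp_neg_mul_rpow (by linarith : -1 < p - 1) one_pos hs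
  · simp only [neg_mul]
    rw [integral_rpow_mul_exp_neg_mul_Ioi hp hs, one_div, inv_rpow hs.le, inv_mul_eq_div]

lemma intervalIntegrable (hf : HasLaplace f s a) {t : ℝ} (ht : 0 ≤ t) :
    IntervalIntegrable f volume 0 t := by
  have h := ((intervalIntegrable_iff_integrableOn_Ioc_of_le ht).mpr
    (hf.1.mono_set Ioc_subset_Ioi_self)).continuousOn_smul
      (f := fun u => exp (s * u)) (by fun_prop)
  simpa only [smul_smul, ← exp_add, ← add_mul, add_neg_cancel, zero_mul, exp_zero, one_smul] using h

variable [CompleteSpace E]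

-- `e^{-st} ∫₀^t f` is the convolution over `[0, t]` of `e^{-su} f(u)` and `e^{-su}`.
lemma integral (hs : 0 < s) (hf : HasLaplace f s a) :
    HasLaplace (fun t => ∫ u in 0..t, f u) s (s⁻¹ • a) := by
  have hone : HasLaplace (fun _ => (1 : ℝ)) s s⁻¹ := by simpa using const hs (1 : ℝ)
  simp only [HasLaplace, smul_eq_mul, mul_one] at hone
  let L : E →L[ℝ] ℝ →L[ℝ] E := (ContinuousLinearMap.lsmul ℝ ℝ).flip
  have hconv (t : ℝ) : exp (-s * t) • ∫ u in 0..t, f u =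
      ∫ u in 0..t, L (exp (-s * u) • f u) (exp (-s * (t - u))) := by
    rw [← intervalIntegral.integral_smul]
    refine intervalIntegral.integral_congr fun u _ => ?_
    simp only [L, ContinuousLinearMap.flip_apply, ContinuousLinearMap.lsmul_apply, smul_smul,
      ← exp_add, ← mul_add, sub_add_cancel]
  simp only [HasLaplace, hconv]
  constructor
  · exact (integrable_indicator_iff measurableSet_Ioi).mp
      (integrable_posConvolution hf.1 hone.1 L)
  · rw [integral_posConvolution hf.1 hone.1 L, hf.2, hone.2]
    rfl

lemma of_hasDerivAt {f' : ℝ → E} (hs : 0 < s) (hf : ContinuousOn f (Ici 0))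
    (hderiv : ∀ t ∈ Ioi 0, HasDerivAt f (f' t) t) (hf' : HasLaplace f' s a) :
    HasLaplace f s (s⁻¹ • (f 0 + a)) := by
  rw [smul_add]
  refine ((const hs (f 0)).add (hf'.integral hs)).congr fun t (ht : 0 < t) => ?_
  have hFTC : ∫ u in 0..t, f' u = f t - f 0 :=
    intervalIntegral.integral_eq_sub_of_hasDerivAt_of_le ht.le (hf.mono Icc_subset_Ici_self)
      (fun u hu => hderiv u hu.1) (hf'.intervalIntegrable ht.le)
  simp only [hFTC, add_sub_cancel]

end HasLaplace

end Laplace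

@[simp]
lemma errorFun_zero : errorFun 0 = 0 := by
  simp [errorFun]

lemma hasDerivAt_errorFun (x : ℝ) : HasDerivAt errorFun (2 / √π * exp (-x ^ 2)) x := by
  have hcont : Continuous fun t : ℝ => exp (-t ^ 2) := by fun_prop
  exact (hcont.integral_hasStrictDerivAt 0 x).hasDerivAt.const_mul _

@[fun_prop]
lemma continuous_errorFun : Continuous errorFun :=
  continuous_iff_continuousAt.mpr fun x => (hasDerivAt_errorFun x).continuousAt

lemma hasDerivAt_errorFun_sqrt {t : ℝ} (ht : 0 < t) :
    HasDerivAt (fun t => errorFun √t) (exp (-t) / (√π * √t)) t := by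
  refine ((hasDerivAt_errorFun √t).comp t (hasDerivAt_sqrt ht.ne')).congr_deriv ?_
  rw [sq_sqrt ht.le]
  field_simp

lemma hasLaplace_inv_sqrt {s : ℝ} (hs : 0 < s) : HasLaplace (fun t => (√t)⁻¹) s (√π / √s) := by
  have h := HasLaplace.rpow one_half_pos hs
  rw [Gamma_one_half_eq, ← sqrt_eq_rpow] at h
  refine h.congr fun t (ht : 0 < t) => ?_
  simp only
  rw [show (1 / 2 - 1 : ℝ) = -(1 / 2) by norm_num, rpow_neg ht.le, ← sqrt_eq_rpow]

lemma hasLaplace_errorFun_sqrt {s : ℝ} (hs : 0 < s) :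
    HasLaplace (fun t => errorFun √t) s (1 / (s * √(s + 1))) := by
  have hs₁ : 0 < s + 1 := by positivity
  have hderiv : HasLaplace (fun t => exp (-t) / (√π * √t)) s (1 / √(s + 1)) := by
    convert ((hasLaplace_inv_sqrt hs₁).exp_smul).const_smul (1 / √π) using 2 <;>
      simp only [smul_eq_mul, neg_one_mul] <;> field_simp
  convert hderiv.of_hasDerivAt hs (by fun_prop) fun t ht => hasDerivAt_errorFun_sqrt ht using 1
  rw [sqrt_zero, errorFun_zero, zero_add, smul_eq_mul]
  field_simp

lemma rpow_three_halves {x : ℝ} (hx : 0 ≤ x) : x ^ ((3 : ℝ) / 2) = √x ^ 3 := by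
  rw [sqrt_eq_rpow, ← rpow_mul_natCast hx]
  norm_num

lemma rpow_mul_absAreaF1 {ρ : ℝ} (hρ : 0 < ρ) :
    ρ ^ ((3 : ℝ) / 2) * absAreaF1 ρ =
      (√ρ * exp (-ρ) / √π + (ρ - 1 / 2) * errorFun √ρ) / √2 := by
  rw [absAreaF1, rpow_three_halves hρ.le, sqrt_mul zero_le_two]
  have hsq : √ρ ^ 2 = ρ := sq_sqrt hρ.le
  field_simp
  linear_combination 2 * √ρ * exp (-ρ) * hsq

lemma hasDerivAt_sqrt_mul_exp_add_mul_errorFun_sqrt {t : ℝ} (ht : 0 < t) :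
    HasDerivAt (fun t => √t * exp (-t) / √π + (t - 1 / 2) * errorFun √t) (errorFun √t) t := by
  have hgauss := ((hasDerivAt_sqrt ht.ne').mul (hasDerivAt_neg t).exp).div_const √π
  have herf := ((hasDerivAt_id t).sub_const (1 / 2)).mul (hasDerivAt_errorFun_sqrt ht)
  refine (hgauss.add herf).congr_deriv ?_
  have hsq : √t ^ 2 = t := sq_sqrt ht.le
  simp only [id]
  field_simp
  linear_combination -(2 * exp (-t)) * hsq

lemma hasLaplace_rpow_mul_absAreaF1 {s : ℝ} (hs : 0 < s) :
    HasLaplace (fun ρ => ρ ^ ((3 : ℝ) / 2) * absAreaF1 ρ) s (1 / (√2 * s ^ 2 * √(s + 1))) := by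
  have h := ((hasLaplace_errorFun_sqrt hs).of_hasDerivAt hs (by fun_prop) fun t ht =>
    hasDerivAt_sqrt_mul_exp_add_mul_errorFun_sqrt ht).const_smul (1 / √2)
  convert h.congr (g := fun ρ => ρ ^ ((3 : ℝ) / 2) * absAreaF1 ρ) fun ρ hρ => ?_ using 1
  · simp only [sqrt_zero, errorFun_zero, zero_mul, mul_zero, zero_div, add_zero, zero_add,
      smul_eq_mul]
    field_simp
  · simp only
    rw [rpow_mul_absAreaF1 hρ, smul_eq_mul, one_div_mul_eq_div]

/-- **Laplace transform of the mean of the absolute area of reset Brownian motion**: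
for `r, s > 0`, `∫₀^∞ e^{-sT} T^{3/2} f₁(rT) dT = 1/(√2 s² √(s+r))`. -/
theorem laplace_absArea_mean (r s : ℝ) (hr : 0 < r) (hs : 0 < s) :
    (∫ T in Ioi (0:ℝ), Real.exp (-s * T) * T ^ ((3:ℝ)/2) * absAreaF1 (r * T))
      = 1 / (Real.sqrt 2 * s ^ 2 * Real.sqrt (s + r)) := by
  have hscaled := ((hasLaplace_rpow_mul_absAreaF1 (div_pos hs hr)).comp_mul_left hr).const_smul
    (1 / r ^ ((3:ℝ)/2))
  calc ∫ T in Ioi (0:ℝ), exp (-s * T) * T ^ ((3:ℝ)/2) * absAreaF1 (r * T)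
      = ∫ T in Ioi (0:ℝ), exp (-s * T) •
          (1 / r ^ ((3:ℝ)/2)) • ((r * T) ^ ((3:ℝ)/2) * absAreaF1 (r * T)) := by
        refine setIntegral_congr_fun measurableSet_Ioi fun T (hT : 0 < T) => ?_
        simp only [smul_eq_mul]
        rw [mul_rpow hr.le hT.le]
        field_simp
    _ = (1 / r ^ ((3:ℝ)/2)) • r⁻¹ • (1 / (√2 * (s / r) ^ 2 * √(s / r + 1))) := hscaled.2
    _ = 1 / (√2 * s ^ 2 * √(s + r)) := by
        have hsr : √(s / r + 1) = √(s + r) / √r := by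
          rw [div_add_one hr.ne', sqrt_div (add_pos hs hr).le]
        rw [hsr, rpow_three_halves hr.le]
        simp only [smul_eq_mul]
        field_simp
        exact (sq_sqrt hr.le).symm
end

section
/- Define f₂ : (0,∞) → ℝ by f₂(ρ) = (1/(8πρ³))·[ 2π·( 2ρ² + ρ − 6 + (5ρ + 6)e^{−ρ} ) − ( 2√ρ·e^{−ρ} + √π·(2ρ − 1)·erf(√ρ) )² ], where erf(x) = (2/√π)∫₀^x e^{−t²} dt is the error function. Then lim_{ρ→∞} ρ² · f₂(ρ) = 3/4. -/
open MeasureTheory Set Real Filter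

/-- The function `f₂` giving the variance of the absolute area of reset Brownian motion
via `Var_r[C_T] = T³ f₂(rT)` (Theorem 7). -/
noncomputable def absAreaF2 (ρ : ℝ) : ℝ :=
  (1 / (8 * π * ρ ^ 3)) *
    (2 * π * (2 * ρ ^ 2 + ρ - 6 + (5 * ρ + 6) * Real.exp (-ρ))
      - (2 * Real.sqrt ρ * Real.exp (-ρ)
          + Real.sqrt π * (2 * ρ - 1) * errorFun (Real.sqrt ρ)) ^ 2)

/-!
Put `x = √ρ`. Since `erf x` differs from `1` by an exponentially small amount, the squared term of
`f₂` is `π (2ρ - 1 + ε)²` with `ε = o(1)`. In `2 (2ρ² + ρ - 6) - (2ρ - 1)² = 6ρ - 13` the terms of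
order `ρ²` cancel, and `6ρ`, divided by the prefactor `8ρ` of `ρ² f₂(ρ)`, gives the limit `3/4`.
The Gaussian tail is bounded by comparing `exp (-b t²)` with `exp (-b x t)` for `t ≥ x`.
-/

open Asymptotics

theorem setIntegral_Ioi_exp_neg_mul_sq_le {b x : ℝ} (hb : 0 < b) (hx : 0 < x) :
    ∫ t in Ioi x, Real.exp (-b * t ^ 2) ≤ Real.exp (-b * x ^ 2) / (b * x) := by
  have hbx : -(b * x) < 0 := neg_lt_zero.mpr (mul_pos hb hx)
  calc ∫ t in Ioi x, Real.exp (-b * t ^ 2)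
      ≤ ∫ t in Ioi x, Real.exp (-(b * x) * t) := by
        refine setIntegral_mono_on (integrable_exp_neg_mul_sq hb).integrableOn
          (integrableOn_exp_mul_Ioi hbx x) measurableSet_Ioi fun t (ht : x < t) => ?_
        have hxt : x * t ≤ t ^ 2 := by nlinarith
        exact Real.exp_le_exp.mpr (by nlinarith)
    _ = Real.exp (-b * x ^ 2) / (b * x) := by
        rw [integral_exp_mul_Ioi hbx, neg_div_neg_eq]
        ring_nf

theorem tendsto_pow_mul_exp_neg_mul_sq_atTop_nhds_zero {b : ℝ} (hb : 0 < b) (n : ℕ) :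
    Tendsto (fun x : ℝ => x ^ n * Real.exp (-b * x ^ 2)) atTop (nhds 0) := by
  have hexp : Tendsto (fun x : ℝ => Real.exp (-(1 / 2) * x)) atTop (nhds 0) :=
    Real.tendsto_exp_atBot.comp (tendsto_id.const_mul_atTop_of_neg (by norm_num))
  simpa only [Real.rpow_natCast] using
    (rpow_mul_exp_neg_mul_sq_isLittleO_exp_neg hb n).trans_tendsto hexp

/-- The complementary error function `erfc`, in its integral form; it measures how far `errorFun`
is from its limit `1`. -/
noncomputable def complErrorFun (x : ℝ) : ℝ :=
  (2 / √π) * ∫ t in Ioi x, Real.exp (-t ^ 2)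

theorem errorFun_add_complErrorFun (x : ℝ) : errorFun x + complErrorFun x = 1 := by
  have hint : Integrable fun t : ℝ => Real.exp (-t ^ 2) := by
    simpa using integrable_exp_neg_mul_sq one_pos
  have hhalf : ∫ t in Ioi (0 : ℝ), Real.exp (-t ^ 2) = √π / 2 := by
    simpa using integral_gaussian_Ioi 1
  rw [errorFun, complErrorFun, ← mul_add,
    intervalIntegral.integral_interval_add_Ioi hint.integrableOn hint.integrableOn, hhalf]
  field_simp

theorem complErrorFun_nonneg (x : ℝ) : 0 ≤ complErrorFun x :=
  mul_nonneg (by positivity) (integral_nonneg fun _ => (Real.exp_pos _).le)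

theorem complErrorFun_le {x : ℝ} (hx : 0 < x) :
    complErrorFun x ≤ (2 / √π) * (Real.exp (-x ^ 2) / x) := by
  have htail : ∫ t in Ioi x, Real.exp (-t ^ 2) ≤ Real.exp (-x ^ 2) / x := by
    simpa using setIntegral_Ioi_exp_neg_mul_sq_le one_pos hx
  exact mul_le_mul_of_nonneg_left htail (by positivity)

theorem complErrorFun_isBigO_exp_neg_sq :
    complErrorFun =O[atTop] fun x => Real.exp (-x ^ 2) := by
  refine IsBigO.of_bound (2 / √π) ?_
  filter_upwards [eventually_ge_atTop 1] with x hx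
  rw [Real.norm_of_nonneg (complErrorFun_nonneg x), Real.norm_of_nonneg (Real.exp_pos _).le]
  calc complErrorFun x ≤ (2 / √π) * (Real.exp (-x ^ 2) / x) :=
        complErrorFun_le (one_pos.trans_le hx)
    _ ≤ (2 / √π) * Real.exp (-x ^ 2) := by
        gcongr
        exact div_le_self (Real.exp_pos _).le hx

theorem tendsto_pow_mul_complErrorFun_atTop_nhds_zero (n : ℕ) :
    Tendsto (fun x => x ^ n * complErrorFun x) atTop (nhds 0) :=
  ((isBigO_refl (fun x : ℝ => x ^ n) atTop).mul complErrorFun_isBigO_exp_neg_sq).trans_tendsto <| by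
    simpa using tendsto_pow_mul_exp_neg_mul_sq_atTop_nhds_zero one_pos n

/-- The error `ε` in the expression `√π (2 x² - 1 + ε)` for the squared term of
`absAreaF2 (x ^ 2)`. -/
noncomputable def absAreaRemainder (x : ℝ) : ℝ :=
  (2 / √π) * (x * Real.exp (-x ^ 2)) - (2 * x ^ 2 - 1) * complErrorFun x

theorem tendsto_absAreaRemainder_atTop_nhds_zero :
    Tendsto absAreaRemainder atTop (nhds 0) := by
  have hexp : Tendsto (fun x : ℝ => x * Real.exp (-x ^ 2)) atTop (nhds 0) := by
    simpa using tendsto_pow_mul_exp_neg_mul_sq_atTop_nhds_zero one_pos 1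
  have herfc : Tendsto (fun x => (2 * x ^ 2 - 1) * complErrorFun x) atTop (nhds 0) := by
    simpa [sub_mul, mul_assoc] using
      ((tendsto_pow_mul_complErrorFun_atTop_nhds_zero 2).const_mul 2).sub
        (tendsto_pow_mul_complErrorFun_atTop_nhds_zero 0)
  simpa [absAreaRemainder] using! (hexp.const_mul (2 / √π)).sub herfc

theorem sqrt_pi_mul_add_absAreaRemainder {ρ : ℝ} (hρ : 0 ≤ ρ) :
    √π * (2 * ρ - 1 + absAreaRemainder √ρ) =
      2 * √ρ * Real.exp (-ρ) + √π * (2 * ρ - 1) * errorFun √ρ := by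
  rw [absAreaRemainder, Real.sq_sqrt hρ, eq_sub_of_add_eq (errorFun_add_complErrorFun √ρ)]
  field_simp
  ring

theorem sq_mul_absAreaF2_eq {ρ : ℝ} (hρ : 0 < ρ) :
    ρ ^ 2 * absAreaF2 ρ =
      3 / 4 - 13 / 8 * ρ⁻¹ + (5 + 6 * ρ⁻¹) / 4 * Real.exp (-ρ)
        - (2 - ρ⁻¹) / 4 * absAreaRemainder √ρ - ρ⁻¹ / 8 * absAreaRemainder √ρ ^ 2 := by
  rw [absAreaF2, ← sqrt_pi_mul_add_absAreaRemainder hρ.le, mul_pow, Real.sq_sqrt Real.pi_pos.le]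
  field_simp
  ring

/-- **Asymptotics of the variance of the absolute area**: `ρ² f₂(ρ) → 3/4` as `ρ → ∞`,
i.e. `f₂(ρ) ~ 3/(4ρ²)`; hence `lim_{T→∞} T⁻¹ Var_r[C_T] = 3/(4r²)`. -/
theorem absAreaF2_asymptotics :
    Tendsto (fun ρ : ℝ => ρ ^ 2 * absAreaF2 ρ) atTop (nhds (3 / 4)) := by
  have hinv : Tendsto (fun ρ : ℝ => ρ⁻¹) atTop (nhds 0) := tendsto_inv_atTop_zero
  have hexp : Tendsto (fun ρ : ℝ => Real.exp (-ρ)) atTop (nhds 0) :=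
    Real.tendsto_exp_neg_atTop_nhds_zero
  have hrem : Tendsto (fun ρ => absAreaRemainder √ρ) atTop (nhds 0) :=
    tendsto_absAreaRemainder_atTop_nhds_zero.comp Real.tendsto_sqrt_atTop
  have hlim := (((hinv.const_mul (13 / 8)).const_sub (3 / 4)).add
    ((((hinv.const_mul 6).const_add 5).div_const 4).mul hexp)).sub
      (((hinv.const_sub 2).div_const 4).mul hrem) |>.sub ((hinv.div_const 8).mul (hrem.pow 2))
  have hexpansion := (eventually_gt_atTop 0).mono fun ρ hρ => (sq_mul_absAreaF2_eq hρ).symm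
  simpa using hlim.congr' hexpansion
end
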